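/- Let p be a prime number, μ the Haar measure on ℚ_pˣ with μ(ℤ_pˣ) = 1, v the normalized p-adic valuation, |·|_p the normalized absolute value, and χ(t) = (-1)^{v(t)}. Let c, ζ, u₁, u₂ ∈ ℚ_pˣ with u₁·u₂ = ζ, and define Orb(ζ, φ'_c, s) := χ(u₁)·|u₁|_p^{-s} · ∫_{ℚ_pˣ} 1_{ℤ_p}(u₁·t⁻¹) · 1_{c·ℤ_p}(t·u₂) · |t|_p^{s} · χ(t) dμ(t) for s ∈ ℝ. Then Orb(ζ, φ'_c, 0) = 1 if v(c⁻¹·ζ) ≥ 0 and v(c⁻¹·ζ) is even, and Orb(ζ, φ'_c, 0) = 0 otherwise. -/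

import Mathlib

open MeasureTheory

/-- The normalized non-archimedean local orbital integral (with transfer factor)
for the test function `φ'_c = 1_{ℤ_p × c·ℤ_p}` on `ℚ_p × ℚ_p`, defined using a Haar
measure `μ` on `ℚ_pˣ`.  Here `χ(t) = (-1)^{v(t)}` is the quadratic character of the
unramified quadratic extension of `ℚ_p`. -/
noncomputable def padicOrb (p : ℕ) [Fact p.Prime] [MeasurableSpace ℚ_[p]ˣ]
    (μ : Measure ℚ_[p]ˣ) (c u₁ u₂ : ℚ_[p]ˣ) (s : ℝ) : ℝ :=
  (-1 : ℝ) ^ ((u₁ : ℚ_[p]).valuation) * ‖(u₁ : ℚ_[p])‖ ^ (-s) *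
    ∫ t : ℚ_[p]ˣ,
      (Set.indicator {x : ℚ_[p] | ‖x‖ ≤ 1} (fun _ => (1 : ℝ)) ((u₁ : ℚ_[p]) * ((t : ℚ_[p]))⁻¹)) *
      (Set.indicator {y : ℚ_[p] | ‖y‖ ≤ ‖(c : ℚ_[p])‖} (fun _ => (1 : ℝ))
        ((t : ℚ_[p]) * (u₂ : ℚ_[p]))) *
      ‖(t : ℚ_[p])‖ ^ s * (-1 : ℝ) ^ ((t : ℚ_[p]).valuation) ∂μ

/-- The set of elements of `ℚ_[p]ˣ` of a given valuation is open. -/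
theorem isOpen_setOf_valuation_eq (p : ℕ) [Fact p.Prime] (n : ℤ) :
    IsOpen {t : ℚ_[p]ˣ | (t : ℚ_[p]).valuation = n} := by
  have hp : (1 : ℝ) < p := by exact_mod_cast (Fact.out : p.Prime).one_lt
  have h : {t : ℚ_[p]ˣ | (t : ℚ_[p]).valuation = n} =
      (fun t : ℚ_[p]ˣ => (t : ℚ_[p])) ⁻¹' Metric.sphere 0 ((p : ℝ) ^ (-n)) := by
    ext t
    simp only [Set.mem_ofPred_eq, Set.mem_preimage, mem_sphere_zero_iff_norm,
      Padic.norm_eq_zpow_neg_valuation t.ne_zero]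
    rw [zpow_right_inj₀ (by linarith) hp.ne', neg_inj]
  rw [h]
  exact (IsUltrametricDist.isOpen_sphere 0 (by positivity)).preimage Units.continuous_val

/-- A Haar measure on `ℚ_[p]ˣ` giving mass one to the elements of norm one gives mass one to the
elements of any fixed valuation. -/
theorem measure_setOf_valuation_eq (p : ℕ) [Fact p.Prime]
    [MeasurableSpace ℚ_[p]ˣ] [BorelSpace ℚ_[p]ˣ]
    (μ : Measure ℚ_[p]ˣ) [μ.IsHaarMeasure]
    (hμ : μ {t : ℚ_[p]ˣ | ‖(t : ℚ_[p])‖ = 1} = 1) (n : ℤ) :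
    μ {t : ℚ_[p]ˣ | (t : ℚ_[p]).valuation = n} = 1 := by
  have hp : (1 : ℝ) < p := by exact_mod_cast (Fact.out : p.Prime).one_lt
  have hp0 : (p : ℚ_[p]) ≠ 0 := by exact_mod_cast (Fact.out : p.Prime).ne_zero
  rw [← hμ, ← measure_preimage_mul μ ((Units.mk0 (p : ℚ_[p]) hp0) ^ n)]
  congr 1
  ext t
  have hv : (((p : ℚ_[p]) ^ n) * (t : ℚ_[p])).valuation = n + (t : ℚ_[p]).valuation := by
    rw [Padic.valuation_mul (zpow_ne_zero n hp0) t.ne_zero, Padic.valuation_zpow,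
      Padic.valuation_p, mul_one]
  simp only [Set.mem_preimage, Set.mem_ofPred_eq, Units.val_mul, Units.val_zpow_eq_zpow_val,
    Units.val_mk0, hv, Padic.norm_eq_zpow_neg_valuation t.ne_zero]
  rw [zpow_eq_one_iff_right₀ (by linarith) hp.ne']
  lia

/-- The integrand of the orbital integral at `s = 0`, as a finite sum over valuations. -/
theorem padicOrb_integrand_eq_sum (p : ℕ) [Fact p.Prime] (c u₁ u₂ t : ℚ_[p]ˣ) :
    (Set.indicator {x : ℚ_[p] | ‖x‖ ≤ 1} (fun _ => (1 : ℝ)) ((u₁ : ℚ_[p]) * ((t : ℚ_[p]))⁻¹)) *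
      (Set.indicator {y : ℚ_[p] | ‖y‖ ≤ ‖(c : ℚ_[p])‖} (fun _ => (1 : ℝ))
        ((t : ℚ_[p]) * (u₂ : ℚ_[p]))) *
      ‖(t : ℚ_[p])‖ ^ (0 : ℝ) * (-1 : ℝ) ^ ((t : ℚ_[p]).valuation) =
    ∑ k ∈ Finset.range (((c⁻¹ * (u₁ * u₂) : ℚ_[p]ˣ) : ℚ_[p]).valuation + 1).toNat,
      Set.indicator {t : ℚ_[p]ˣ | (t : ℚ_[p]).valuation = (u₁ : ℚ_[p]).valuation - k}
        (fun _ => (-1 : ℝ) ^ ((u₁ : ℚ_[p]).valuation - k)) t := by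
  have hp : (1 : ℝ) < p := by exact_mod_cast (Fact.out : p.Prime).one_lt
  have hm : ((c⁻¹ * (u₁ * u₂) : ℚ_[p]ˣ) : ℚ_[p]).valuation =
      -(c : ℚ_[p]).valuation + ((u₁ : ℚ_[p]).valuation + (u₂ : ℚ_[p]).valuation) := by
    push_cast
    rw [Padic.valuation_mul (inv_ne_zero c.ne_zero) (mul_ne_zero u₁.ne_zero u₂.ne_zero),
      Padic.valuation_mul u₁.ne_zero u₂.ne_zero, Padic.valuation_inv]
  have h₁ : ‖(u₁ : ℚ_[p]) * (t : ℚ_[p])⁻¹‖ ≤ 1 ↔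
      (t : ℚ_[p]).valuation ≤ (u₁ : ℚ_[p]).valuation := by
    rw [Padic.norm_le_one_iff_val_nonneg, Padic.valuation_mul u₁.ne_zero (inv_ne_zero t.ne_zero),
      Padic.valuation_inv]
    lia
  have h₂ : ‖(t : ℚ_[p]) * (u₂ : ℚ_[p])‖ ≤ ‖(c : ℚ_[p])‖ ↔
      (c : ℚ_[p]).valuation ≤ (t : ℚ_[p]).valuation + (u₂ : ℚ_[p]).valuation := by
    rw [Padic.norm_eq_zpow_neg_valuation c.ne_zero,
      Padic.norm_eq_zpow_neg_valuation (mul_ne_zero t.ne_zero u₂.ne_zero),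
      Padic.valuation_mul t.ne_zero u₂.ne_zero, zpow_le_zpow_iff_right₀ hp, neg_le_neg_iff]
  simp only [Set.indicator_apply, Set.mem_ofPred_eq, h₁, h₂, hm, Real.rpow_zero, mul_one]
  by_cases h : (t : ℚ_[p]).valuation ≤ (u₁ : ℚ_[p]).valuation ∧
      (c : ℚ_[p]).valuation ≤ (t : ℚ_[p]).valuation + (u₂ : ℚ_[p]).valuation
  · rw [if_pos h.1, if_pos h.2, one_mul, one_mul, Finset.sum_eq_single
      ((u₁ : ℚ_[p]).valuation - (t : ℚ_[p]).valuation).toNat]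
    · have hk : (u₁ : ℚ_[p]).valuation -
          (((u₁ : ℚ_[p]).valuation - (t : ℚ_[p]).valuation).toNat : ℤ) =
          (t : ℚ_[p]).valuation := by lia
      rw [hk, if_pos rfl]
    · intro k _ hk
      rw [if_neg (by lia)]
    · intro hk
      exact absurd (Finset.mem_range.2 (by lia)) hk
  · rw [Finset.sum_eq_zero]
    · rcases not_and_or.1 h with h | h <;> simp [h]
    · intro k hk
      rw [Finset.mem_range] at hk
      rw [if_neg (by lia)]

/-- The value at `s = 0` of the orbital integral, as an alternating sum. -/
theorem padicOrb_zero_eq_sum (p : ℕ) [Fact p.Prime]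
    [MeasurableSpace ℚ_[p]ˣ] [BorelSpace ℚ_[p]ˣ]
    (μ : Measure ℚ_[p]ˣ) [μ.IsHaarMeasure]
    (hμ : μ {t : ℚ_[p]ˣ | ‖(t : ℚ_[p])‖ = 1} = 1) (c u₁ u₂ : ℚ_[p]ˣ) :
    padicOrb p μ c u₁ u₂ 0 =
      ∑ k ∈ Finset.range (((c⁻¹ * (u₁ * u₂) : ℚ_[p]ˣ) : ℚ_[p]).valuation + 1).toNat,
        (-1 : ℝ) ^ k := by
  have hmeas (n : ℤ) : MeasurableSet {t : ℚ_[p]ˣ | (t : ℚ_[p]).valuation = n} :=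
    (isOpen_setOf_valuation_eq p n).measurableSet
  simp only [padicOrb, padicOrb_integrand_eq_sum]
  rw [neg_zero, Real.rpow_zero, mul_one]
  rw [integral_finsetSum, Finset.mul_sum]
  · refine Finset.sum_congr rfl fun k _ => ?_
    rw [integral_indicator_const _ (hmeas _), measureReal_def,
      measure_setOf_valuation_eq p μ hμ, ENNReal.toReal_one, one_smul,
      ← zpow_add₀ (by norm_num), ← zpow_natCast,
      show (u₁ : ℚ_[p]).valuation + ((u₁ : ℚ_[p]).valuation - k) =
      2 * ((u₁ : ℚ_[p]).valuation - k) + k by ring, zpow_add₀ (by norm_num), zpow_mul]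
    simp
  · intro k _
    refine (integrable_indicator_iff (hmeas _)).2 (integrableOn_const ?_)
    rw [measure_setOf_valuation_eq p μ hμ]
    exact ENNReal.one_ne_top

/-- The value at `s = 0` of the normalized local orbital integral for
`φ'_c = 1_{ℤ_p × c·ℤ_p}`: it is `1` if `v(c⁻¹ζ) ≥ 0` is even, and `0` otherwise. -/
theorem stmt2 (p : ℕ) [Fact p.Prime]
    [MeasurableSpace ℚ_[p]ˣ] [BorelSpace ℚ_[p]ˣ]
    (μ : Measure ℚ_[p]ˣ) [μ.IsHaarMeasure]
    (hμ : μ {t : ℚ_[p]ˣ | ‖(t : ℚ_[p])‖ = 1} = 1)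
    (c ζ u₁ u₂ : ℚ_[p]ˣ) (hu : u₁ * u₂ = ζ) :
    (0 ≤ ((c⁻¹ * ζ : ℚ_[p]ˣ) : ℚ_[p]).valuation ∧
        Even ((c⁻¹ * ζ : ℚ_[p]ˣ) : ℚ_[p]).valuation →
      padicOrb p μ c u₁ u₂ 0 = 1) ∧
    (¬(0 ≤ ((c⁻¹ * ζ : ℚ_[p]ˣ) : ℚ_[p]).valuation ∧
        Even ((c⁻¹ * ζ : ℚ_[p]ˣ) : ℚ_[p]).valuation) →
      padicOrb p μ c u₁ u₂ 0 = 0) := by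
  subst hu
  rw [padicOrb_zero_eq_sum p μ hμ, neg_one_geom_sum]
  generalize ((c⁻¹ * (u₁ * u₂) : ℚ_[p]ˣ) : ℚ_[p]).valuation = m
  constructor
  · rintro ⟨h0, h⟩
    rw [if_neg]
    grind
  · intro h
    rw [if_pos]
    grind
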